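/- arXiv:2211.13578 — 4 statements merged into one kernel-verified Lean document; each statement's English description precedes it below -/
import Mathlib

section
/- Let G be a finite connected simple graph with edge set E, let w₁, …, w_k : E → ℝ≥0 be k weight functions, and let w̄ := Σ_{i=1}^k w_i. Then there exists a spanning tree of G that is a minimum spanning tree under every w_i (a perfect MST cover) if and only if every minimum spanning tree of G under w̄ is a minimum spanning tree of G under every w_i. -/
/-!
The total weight under `∑ i, w i` is the sum of the agents' weights. If `T` is optimal for every
agent, then `T` costs each agent at most what any other spanning tree `S` costs. When `S` minimises
the total weight, these `k` inequalities sum to an equality, hence each of them is an equality and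
`S` is optimal for every agent. Conversely, a connected finite graph has a spanning tree, and
hence an MST under the total weight (`exists_isMST`); by hypothesis it is a perfect cover.
-/

open Finset
open scoped Classical

noncomputable section

variable {V : Type*}

/-- A spanning tree of `G`, as a finite set of edges: a subset of the edge set of `G`
whose induced subgraph is a (spanning) tree. -/
def IsSpanningTree [Fintype V] (G : SimpleGraph V) (T : Finset (Sym2 V)) : Prop :=
  (T : Set (Sym2 V)) ⊆ G.edgeSet ∧ (SimpleGraph.fromEdgeSet (T : Set (Sym2 V))).IsTree

/-- `T` is a minimum spanning tree of `G` under weight function `w`. -/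
def IsMST [Fintype V] (G : SimpleGraph V) (w : Sym2 V → NNReal) (T : Finset (Sym2 V)) : Prop :=
  IsSpanningTree G T ∧
    ∀ T' : Finset (Sym2 V), IsSpanningTree G T' → ∑ e ∈ T, w e ≤ ∑ e ∈ T', w e

theorem exists_isSpanningTree [Fintype V] (G : SimpleGraph V) (hG : G.Connected) :
    ∃ T : Finset (Sym2 V), IsSpanningTree G T := by
  obtain ⟨H, hle, hH⟩ := hG.exists_isTree_le
  refine ⟨H.edgeFinset, ?_, ?_⟩
  · rw [SimpleGraph.coe_edgeFinset]
    exact SimpleGraph.edgeSet_mono hle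
  · rw [SimpleGraph.coe_edgeFinset, SimpleGraph.fromEdgeSet_edgeSet]
    exact hH

theorem exists_isMST [Fintype V] (G : SimpleGraph V) (hG : G.Connected) (w : Sym2 V → NNReal) :
    ∃ T : Finset (Sym2 V), IsMST G w T := by
  obtain ⟨T, hT, hmin⟩ := Set.exists_min_image {T : Finset (Sym2 V) | IsSpanningTree G T}
    (fun T => ∑ e ∈ T, w e) (Set.toFinite _) (exists_isSpanningTree G hG)
  exact ⟨T, hT, hmin⟩

/-- A perfect MST cover (a spanning tree that is an MST for every agent)
exists if and only if every MST under the aggregated weight `w̄ = Σᵢ wᵢ` is an MST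
under every agent's weight function. -/
theorem perfect_cover_iff_sum_mst [Fintype V] (G : SimpleGraph V) (hG : G.Connected)
    (k : ℕ) (w : Fin k → Sym2 V → NNReal) :
    (∃ T : Finset (Sym2 V), ∀ i : Fin k, IsMST G (w i) T) ↔
      (∀ T : Finset (Sym2 V), IsMST G (fun e => ∑ i : Fin k, w i e) T →
        ∀ i : Fin k, IsMST G (w i) T) := by
  constructor
  · rintro ⟨T, hT⟩ S ⟨hS, hSmin⟩ i
    have hle : ∀ j ∈ Finset.univ, ∑ e ∈ T, w j e ≤ ∑ e ∈ S, w j e :=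
      fun j _ => (hT j).2 S hS
    have hsum : ∑ j, ∑ e ∈ S, w j e ≤ ∑ j, ∑ e ∈ T, w j e := by
      rw [Finset.sum_comm, Finset.sum_comm (t := T)]
      exact hSmin T (hT i).1
    have heq := (Finset.sum_eq_sum_iff_of_le hle).1
      (le_antisymm (Finset.sum_le_sum hle) hsum) i (Finset.mem_univ i)
    exact ⟨hS, fun T' hT' => heq ▸ (hT i).2 T' hT'⟩
  · intro h
    obtain ⟨T, hT⟩ := exists_isMST G hG (fun e => ∑ i : Fin k, w i e)
    exact ⟨T, h T hT⟩
end
end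

section
/- Let G be a finite connected simple graph with edge set E, let w : E → ℝ≥0 be a weight function, define f(H) := max_{T ∈ MST(G,w)} |H ∩ T|, and for H ⊆ E let MST^H(G,w) := {T ∈ MST(G,w) : |T ∩ H| = f(H)}. Then for every H ⊆ E and edge e ∈ E \ H, one has f(H ∪ {e}) − f(H) = 1 if and only if e ∈ T for some minimum spanning tree T ∈ MST^H(G,w). -/
/-!
Adding `e` to `H` raises the overlap `|H ∩ T|` with a tree `T` by one if `e ∈ T` and leaves it
unchanged otherwise, so the progress function grows by at most one. It grows by exactly one
precisely when some minimum spanning tree containing `e` already attains the maximum for `H`: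
a maximizer for `H ∪ {e}` is such a tree, and conversely such a tree attains `f(H) + 1`.
-/

open Finset
open scoped Classical

noncomputable section

variable {V : Type*}

/-- The progress function `f(H) = max_{T ∈ MST(G,w)} |H ∩ T|`: the maximum number of edges
of `H` that can simultaneously appear in a single minimum spanning tree of `G` under `w`. -/
def progress [Fintype V] (G : SimpleGraph V) (w : Sym2 V → NNReal) (H : Finset (Sym2 V)) : ℕ :=
  (Finset.univ.filter (IsMST G w)).sup fun T => (H ∩ T).card

/-- For every `H ⊆ E` and edge `e ∈ E \ H`, the marginal increase
`f(H ∪ {e}) − f(H)` equals `1` if and only if `e` belongs to some MST achieving the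
maximum overlap `f(H)` with `H` (i.e., some `T ∈ MST^H(G,w)`). -/
theorem progress_increment_iff [Fintype V] (G : SimpleGraph V) (hG : G.Connected)
    (w : Sym2 V → NNReal) (H : Finset (Sym2 V)) (hH : (H : Set (Sym2 V)) ⊆ G.edgeSet)
    (e : Sym2 V) (heE : e ∈ G.edgeSet) (heH : e ∉ H) :
    progress G w (insert e H) = progress G w H + 1 ↔
      ∃ T : Finset (Sym2 V), IsMST G w T ∧ (T ∩ H).card = progress G w H ∧ e ∈ T := by
  have card_insert (T : Finset (Sym2 V)) :
      (insert e H ∩ T).card = (H ∩ T).card + if e ∈ T then 1 else 0 := by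
    by_cases h : e ∈ T
    · rw [insert_inter_of_mem h, card_insert_of_notMem (by simp [heH])]
      simp [h]
    · rw [insert_inter_of_notMem h]
      simp [h]
  have le_progress (K T : Finset (Sym2 V)) (hT : IsMST G w T) :
      (K ∩ T).card ≤ progress G w K :=
    le_sup (f := fun T => (K ∩ T).card) (by simpa using hT)
  constructor
  · intro h
    -- The supremum over an empty family would be `0`, so the positive value forces an MST to exist.
    have hne : (univ.filter (IsMST G w)).Nonempty := by
      rw [nonempty_iff_ne_empty]
      intro h0
      simp [progress, h0] at h
    obtain ⟨T, hT, hTmax⟩ := exists_mem_eq_sup _ hne fun T => (insert e H ∩ T).card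
    have hmst : IsMST G w T := by simpa using hT
    have hval : (insert e H ∩ T).card = progress G w H + 1 := hTmax.symm.trans h
    have hle := le_progress H T hmst
    rw [card_insert] at hval
    refine ⟨T, hmst, ?_, ?_⟩
    · rw [inter_comm]
      split_ifs at hval <;> omega
    · by_contra heT
      rw [if_neg heT] at hval
      omega
  · rintro ⟨T, hT, hcard, heT⟩
    apply le_antisymm
    · refine Finset.sup_le fun S hS => ?_
      have hle := le_progress H S (by simpa using hS)
      rw [card_insert]
      split_ifs <;> omega
    · have hle := le_progress (insert e H) T hT
      rw [card_insert, if_pos heT, inter_comm, hcard] at hle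
      exact hle
end
end

section
/- Let G be a finite connected simple graph with edge set E, let w : E → ℝ≥0 be a weight function, let H ⊆ E, and define f(H) := max_{T ∈ MST(G,w)} |H ∩ T|. Let ε > 0 be sufficiently small, namely ε·|E| < |w(R) − w(R')| for all R, R' ⊆ E with w(R) ≠ w(R'). Define the perturbed weight function w' : E → ℝ by w'(e) = w(e) − ε for e ∈ H and w'(e) = w(e) for e ∉ H. Then the minimum spanning trees of G under w' are exactly those minimum spanning trees of G under w achieving the maximum overlap with H, i.e., MST(G, w') = {T ∈ MST(G, w) : |T ∩ H| = f(H)}. -/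
/-!
The perturbed weight of a tree `T` is `w(T) - ε |T ∩ H|`. Since `|T ∩ H| ≤ |E|` and distinct
values of `w` on edge sets differ by more than `ε |E|`, comparing perturbed weights of spanning
trees amounts to comparing the pairs `(w(T), -|T ∩ H|)` lexicographically
(`perturbed_le_iff`). Minimizers for the lexicographic order are the minimizers of `w` which,
among those, maximize `|T ∩ H|`.
-/

open Finset
open scoped Classical

noncomputable section

variable {V : Type*}

/-- `T` is a minimum spanning tree of `G` under a real-valued weight function `w`. -/
def IsMSTReal [Fintype V] (G : SimpleGraph V) (w : Sym2 V → ℝ) (T : Finset (Sym2 V)) : Prop :=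
  IsSpanningTree G T ∧
    ∀ T' : Finset (Sym2 V), IsSpanningTree G T' → ∑ e ∈ T, w e ≤ ∑ e ∈ T', w e

lemma sum_perturbed (w : Sym2 V → NNReal) (H T : Finset (Sym2 V)) (ε : ℝ) :
    ∑ e ∈ T, (if e ∈ H then (w e : ℝ) - ε else (w e : ℝ)) =
      ∑ e ∈ T, (w e : ℝ) - ε * ((T ∩ H).card : ℝ) := by
  have h : ∀ e, (if e ∈ H then (w e : ℝ) - ε else (w e : ℝ)) =
      (w e : ℝ) - if e ∈ H then ε else 0 := by
    intro e; split_ifs <;> simp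
  simp_rw [h, Finset.sum_sub_distrib]
  rw [← Finset.sum_filter, Finset.filter_mem_eq_inter, Finset.sum_const, nsmul_eq_mul, mul_comm]

/-- The order on perturbed values `a - ε m` is lexicographic in `a` and `-m`, when distinct values
of `a` differ by more than `ε N` and the overlaps `m` are at most `N`. -/
lemma perturbed_le_iff {a b ε : ℝ} {m n N : ℕ} (hε : 0 < ε) (hm : m ≤ N) (hn : n ≤ N)
    (hgap : a ≠ b → ε * N < |a - b|) :
    a - ε * m ≤ b - ε * n ↔ a < b ∨ (a = b ∧ n ≤ m) := by
  have hm' : ε * m ≤ ε * N := by gcongr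
  have hn' : ε * n ≤ ε * N := by gcongr
  have hm0 : 0 ≤ ε * m := by positivity
  have hn0 : 0 ≤ ε * n := by positivity
  rcases lt_trichotomy a b with h | h | h
  · have := hgap h.ne
    rw [abs_of_neg (sub_neg.2 h)] at this
    exact iff_of_true (by linarith) (Or.inl h)
  · subst h
    rw [sub_le_sub_iff_left, mul_le_mul_iff_of_pos_left hε]
    simp
  · have := hgap h.ne'
    rw [abs_of_pos (sub_pos.2 h)] at this
    exact iff_of_false (by linarith) (by rintro (h' | ⟨h', -⟩) <;> linarith)

/-- Let `ε > 0` be sufficiently small, namely `ε·|E| < |w(R) − w(R')|`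
whenever `R, R' ⊆ E` have different total weights. Perturb the weights by decreasing the
weight of every edge of `H` by `ε`. Then the MSTs under the perturbed weights are exactly
the MSTs under `w` that achieve the maximum overlap `f(H)` with `H`. -/
theorem perturbed_mst_iff_max_overlap [Fintype V] (G : SimpleGraph V) (hG : G.Connected)
    (w : Sym2 V → NNReal) (H : Finset (Sym2 V)) (hH : (H : Set (Sym2 V)) ⊆ G.edgeSet)
    (ε : ℝ) (hε : 0 < ε)
    (hsmall : ∀ R R' : Finset (Sym2 V), (R : Set (Sym2 V)) ⊆ G.edgeSet →
      (R' : Set (Sym2 V)) ⊆ G.edgeSet →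
      (∑ e ∈ R, (w e : ℝ)) ≠ (∑ e ∈ R', (w e : ℝ)) →
      ε * G.edgeFinset.card < |(∑ e ∈ R, (w e : ℝ)) - ∑ e ∈ R', (w e : ℝ)|) :
    ∀ T : Finset (Sym2 V),
      IsMSTReal G (fun e => if e ∈ H then (w e : ℝ) - ε else (w e : ℝ)) T ↔
        (IsMST G w T ∧ (T ∩ H).card = progress G w H) := by
  have hcard : ∀ T, IsSpanningTree G T → (T ∩ H).card ≤ G.edgeFinset.card := fun T hT =>
    Finset.card_le_card fun e he =>
      SimpleGraph.mem_edgeFinset.2 (hT.1 (Finset.mem_inter.1 he).1)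
  have key : ∀ T T', IsSpanningTree G T → IsSpanningTree G T' →
      (∑ e ∈ T, (if e ∈ H then (w e : ℝ) - ε else (w e : ℝ)) ≤
        ∑ e ∈ T', (if e ∈ H then (w e : ℝ) - ε else (w e : ℝ)) ↔
      ∑ e ∈ T, w e < ∑ e ∈ T', w e ∨
        (∑ e ∈ T, w e = ∑ e ∈ T', w e ∧ (T' ∩ H).card ≤ (T ∩ H).card)) := by
    intro T T' hT hT'
    rw [sum_perturbed, sum_perturbed,
      perturbed_le_iff hε (hcard T hT) (hcard T' hT') (hsmall T T' hT.1 hT'.1)]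
    norm_cast
  intro T
  constructor
  · rintro ⟨hT, hmin⟩
    have hmst : IsMST G w T := ⟨hT, fun T' hT' => by
      rcases (key T T' hT hT').1 (hmin T' hT') with h | h
      exacts [h.le, h.1.le]⟩
    refine ⟨hmst, le_antisymm ?_ ?_⟩
    · rw [Finset.inter_comm]
      exact Finset.le_sup (f := fun T => (H ∩ T).card)
        (Finset.mem_filter.2 ⟨Finset.mem_univ T, hmst⟩)
    · refine Finset.sup_le fun T' hT' => ?_
      have hT' := (Finset.mem_filter.1 hT').2
      rw [Finset.inter_comm]
      rcases (key T T' hT hT'.1).1 (hmin T' hT'.1) with h | h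
      exacts [absurd (hT'.2 T hT) h.not_ge, h.2]
  · rintro ⟨hmst, hmax⟩
    refine ⟨hmst.1, fun T' hT' => (key T T' hmst.1 hT').2 ?_⟩
    rcases (hmst.2 T' hT').lt_or_eq with h | h
    · exact Or.inl h
    -- Here `T'` has the same weight as `T`, so it is itself an MST and competes in `progress`.
    · have hmst' : IsMST G w T' := ⟨hT', fun S hS => h ▸ hmst.2 S hS⟩
      refine Or.inr ⟨h, ?_⟩
      rw [hmax, Finset.inter_comm]
      exact Finset.le_sup (f := fun T => (H ∩ T).card)
        (Finset.mem_filter.2 ⟨Finset.mem_univ T', hmst'⟩)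
end
end

section
/- Let (U, S) be a set cover instance with ground set U = {e₁, …, e_p} (p ≥ 1) and subsets S = {s₁, …, s_q} ⊆ 2^U (q ≥ 2) whose union is U. Construct the graph G on vertices {a, b₁, …, b_q} whose edge set E consists of the up-edges (a, b_i) for i ∈ [q] and the down-edges (b_i, b_{i+1}) for i ∈ [q−1]. Define p + 1 agents' weight functions: every down-edge has weight 0 for all agents; for agent j ∈ [p], the up-edge (a, b_i) has weight 0 if e_j ∈ s_i and weight 1 otherwise; for agent p + 1, every up-edge has weight 1. Then a subset H ⊆ E is an MST cover of all p + 1 agents if and only if H contains all q − 1 down-edges and for every j ∈ [p] there exists an up-edge (a, b_i) ∈ H with e_j ∈ s_i. Consequently, the minimum cardinality of an MST cover of all agents equals (q − 1) plus the minimum number of subsets in S whose union covers U. -/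
/-!
Every spanning tree of the reduction graph has `q` edges and must contain an up-edge, since the
vertex `a` has no other edges; conversely all down-edges plus any one up-edge form a spanning tree
(`isSpanningTree_combEdges`). Hence the minimum spanning tree weight of an agent is the least weight
of an up-edge.

For the last agent this minimum is `1`, so a minimum spanning tree has at most one up-edge, and
counting edges shows that it contains all `q - 1` down-edges (`downEdge_mem_of_isMST`). For agent `j`
the minimum is `0`, so a minimum spanning tree contains an up-edge `(a, bᵢ)` with `e_j ∈ sᵢ`
(`exists_zero_upEdge_of_isMST`). Conversely, if `H` contains the down-edges and a suitable up-edge for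
each `j`, the down-edges plus that up-edge are a minimum spanning tree inside `H`
(`isMST_combEdges`).

Thus MST covers are exactly the sets `combEdges q C` (all down-edges plus the up-edges indexed by `C`)
for set covers `C`, and `combEdges q C` has `(q - 1) + |C|` elements, which compares the optima.
-/

open Finset
open scoped Classical

noncomputable section

variable {V : Type*}

/-- The up-edge `(a, bᵢ)` of the reduction graph, where `a = none` and `bᵢ = some i`. -/
def upEdge (q : ℕ) (i : Fin q) : Sym2 (Option (Fin q)) :=
  s(none, some i)

/-- The down-edge `(bᵢ, bᵢ₊₁)` of the reduction graph, for `i ∈ [q−1]`. -/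
def downEdge (q : ℕ) (i : Fin (q - 1)) : Sym2 (Option (Fin q)) :=
  s(some ⟨(i : ℕ), lt_of_lt_of_le i.isLt (Nat.sub_le q 1)⟩,
    some ⟨(i : ℕ) + 1, by have := i.isLt; omega⟩)

/-- The reduction graph on vertices `{a} ∪ {b₁, …, b_q}`, whose edges are the up-edges
`(a, bᵢ)` for `i ∈ [q]` and the down-edges `(bᵢ, bᵢ₊₁)` for `i ∈ [q−1]`. -/
def redGraph (q : ℕ) : SimpleGraph (Option (Fin q)) :=
  SimpleGraph.fromEdgeSet (Set.range (upEdge q) ∪ Set.range (downEdge q))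

/-- The symmetric weight function which assigns weight `g i` to the up-edge `(a, bᵢ)`
and weight `0` to every other pair of vertices (in particular to every down-edge). -/
def upWeight (q : ℕ) (g : Fin q → NNReal) : Sym2 (Option (Fin q)) → NNReal :=
  Sym2.lift ⟨fun x y =>
    match x, y with
    | none, some i => g i
    | some i, none => g i
    | _, _ => 0,
    by rintro (_ | i) (_ | j) <;> rfl⟩

/-- The weight function of agent `j` in the reduction: every down-edge has weight `0`;
for `j < p`, the up-edge `(a, bᵢ)` has weight `0` if `e_j ∈ sᵢ` and `1` otherwise;
for the last agent `j = p`, every up-edge has weight `1`. -/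
def agentWeight (p q : ℕ) (Sset : Fin q → Finset (Fin p)) (j : Fin (p + 1)) :
    Sym2 (Option (Fin q)) → NNReal :=
  if h : (j : ℕ) < p then
    upWeight q (fun i => if (⟨(j : ℕ), h⟩ : Fin p) ∈ Sset i then 0 else 1)
  else
    upWeight q (fun _ => 1)

/-- The set of all down-edges. -/
def downEdges (q : ℕ) : Finset (Sym2 (Option (Fin q))) := univ.image (downEdge q)

/-- The edge set consisting of all down-edges and the up-edges `(a, bᵢ)` with `i ∈ C`. -/
def combEdges (q : ℕ) (C : Finset (Fin q)) : Finset (Sym2 (Option (Fin q))) :=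
  downEdges q ∪ C.image (upEdge q)

lemma upEdge_injective (q : ℕ) : Function.Injective (upEdge q) := by
  intro i j h
  simpa [upEdge] using h

lemma downEdge_injective (q : ℕ) : Function.Injective (downEdge q) := by
  intro i j h
  simp only [downEdge, Sym2.eq_iff, Option.some.injEq, Fin.mk.injEq] at h
  ext
  omega

lemma upEdge_ne_downEdge (q : ℕ) (i : Fin q) (j : Fin (q - 1)) : upEdge q i ≠ downEdge q j := by
  simp [upEdge, downEdge]

lemma card_downEdges (q : ℕ) : (downEdges q).card = q - 1 := by
  rw [downEdges, card_image_of_injective _ (downEdge_injective q)]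
  simp

lemma card_combEdges (q : ℕ) (C : Finset (Fin q)) :
    (combEdges q C).card = (q - 1) + C.card := by
  rw [combEdges, card_union_of_disjoint, card_downEdges,
    card_image_of_injective _ (upEdge_injective q)]
  rw [Finset.disjoint_left]
  intro e he hu
  obtain ⟨i, -, rfl⟩ := mem_image.1 he
  obtain ⟨j, -, h⟩ := mem_image.1 hu
  exact upEdge_ne_downEdge q j i h

lemma upEdge_mem_combEdges {q : ℕ} {C : Finset (Fin q)} {i : Fin q} :
    upEdge q i ∈ combEdges q C ↔ i ∈ C := by
  simp only [combEdges, downEdges, mem_union, mem_image, mem_univ, true_and,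
    (upEdge_injective q).eq_iff, exists_eq_right, or_iff_right_iff_imp]
  rintro ⟨j, hj⟩
  exact absurd hj.symm (upEdge_ne_downEdge q i j)

lemma downEdge_mem_combEdges {q : ℕ} (C : Finset (Fin q)) (i : Fin (q - 1)) :
    downEdge q i ∈ combEdges q C := by
  simp [combEdges, downEdges]

lemma mem_edgeSet_redGraph {q : ℕ} {e : Sym2 (Option (Fin q))} :
    e ∈ (redGraph q).edgeSet ↔ (∃ i, upEdge q i = e) ∨ ∃ i, downEdge q i = e := by
  simp only [redGraph, SimpleGraph.edgeSet_fromEdgeSet, Set.mem_sdiff, Set.mem_union,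
    Set.mem_range, and_iff_left_iff_imp]
  rintro (⟨i, rfl⟩ | ⟨i, rfl⟩) <;> simp [upEdge, downEdge]

lemma combEdges_subset (q : ℕ) (C : Finset (Fin q)) :
    (combEdges q C : Set (Sym2 (Option (Fin q)))) ⊆ (redGraph q).edgeSet := by
  intro e he
  rw [mem_edgeSet_redGraph]
  simp only [combEdges, downEdges, coe_union, coe_image, Set.mem_union, Set.mem_image,
    mem_coe, mem_univ, true_and] at he
  rcases he with h | ⟨i, -, h⟩
  · exact Or.inr h
  · exact Or.inl ⟨i, h⟩

/-- Every set of edges of the reduction graph that contains all down-edges is determined by its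
up-edges. -/
lemma eq_combEdges {q : ℕ} {H : Finset (Sym2 (Option (Fin q)))}
    (hH : (H : Set (Sym2 (Option (Fin q)))) ⊆ (redGraph q).edgeSet)
    (hd : ∀ i, downEdge q i ∈ H) :
    H = combEdges q (univ.filter fun i => upEdge q i ∈ H) := by
  ext e
  constructor
  · intro he
    rcases mem_edgeSet_redGraph.1 (hH he) with ⟨i, rfl⟩ | ⟨i, rfl⟩
    · simpa [upEdge_mem_combEdges] using he
    · exact downEdge_mem_combEdges _ i
  · intro he
    rcases mem_edgeSet_redGraph.1 (combEdges_subset q _ he) with ⟨i, rfl⟩ | ⟨i, rfl⟩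
    · simpa [upEdge_mem_combEdges] using he
    · exact hd i

/-- For a set of edges of the reduction graph, passing to the spanned graph loses nothing, because
the reduction graph has no loops. -/
lemma edgeSet_fromEdgeSet_of_subset {q : ℕ} {T : Finset (Sym2 (Option (Fin q)))}
    (hT : (T : Set (Sym2 (Option (Fin q)))) ⊆ (redGraph q).edgeSet) :
    (SimpleGraph.fromEdgeSet (T : Set (Sym2 (Option (Fin q))))).edgeSet = T := by
  rw [SimpleGraph.edgeSet_fromEdgeSet]
  ext e
  simp only [Set.mem_sdiff, and_iff_left_iff_imp]
  intro he
  exact SimpleGraph.not_isDiag_of_mem_edgeSet _ (hT he)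

/-- All down-edges together with a single up-edge form a spanning tree: a path with a pendant
vertex. -/
lemma isSpanningTree_combEdges (q : ℕ) (i : Fin q) :
    IsSpanningTree (redGraph q) (combEdges q {i}) := by
  refine ⟨combEdges_subset q _, ?_⟩
  rw [SimpleGraph.isTree_iff_connected_and_card]
  have hq : 0 < q := i.pos
  constructor
  · set G := SimpleGraph.fromEdgeSet (combEdges q {i} : Set (Sym2 (Option (Fin q)))) with hG
    have hpath : ∀ k : ℕ, ∀ hk : k < q, G.Reachable (some ⟨0, hq⟩) (some ⟨k, hk⟩) := by
      intro k
      induction k with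
      | zero => intro hk; exact SimpleGraph.Reachable.refl _
      | succ k ih =>
        intro hk
        refine (ih (by omega)).trans (SimpleGraph.Adj.reachable ?_)
        rw [hG, SimpleGraph.fromEdgeSet_adj]
        refine ⟨?_, by simp⟩
        exact downEdge_mem_combEdges {i} ⟨k, by omega⟩
    have hup : G.Reachable none (some i) := by
      refine SimpleGraph.Adj.reachable ?_
      rw [hG, SimpleGraph.fromEdgeSet_adj]
      refine ⟨?_, by simp⟩
      exact upEdge_mem_combEdges.2 (mem_singleton_self i)
    have hall : ∀ v, G.Reachable (some ⟨0, hq⟩) v := by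
      rintro (_ | k)
      · exact (hpath i i.isLt).trans hup.symm
      · exact hpath k k.isLt
    have : Nonempty (Option (Fin q)) := ⟨none⟩
    exact ⟨fun u v => (hall u).symm.trans (hall v)⟩
  · rw [edgeSet_fromEdgeSet_of_subset (combEdges_subset q _)]
    have := card_combEdges q {i}
    simp only [card_singleton] at this
    simp [this]
    omega

lemma card_of_isSpanningTree {q : ℕ} {T : Finset (Sym2 (Option (Fin q)))}
    (hT : IsSpanningTree (redGraph q) T) : T.card = q := by
  have h := (SimpleGraph.isTree_iff_connected_and_card.1 hT.2).2
  rw [edgeSet_fromEdgeSet_of_subset hT.1] at h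
  simpa using h

/-- A spanning tree must use an up-edge, since those are the only edges at the vertex `a`. -/
lemma exists_upEdge_mem {q : ℕ} (hq : 0 < q) {T : Finset (Sym2 (Option (Fin q)))}
    (hT : IsSpanningTree (redGraph q) T) : ∃ i, upEdge q i ∈ T := by
  have : Nontrivial (Option (Fin q)) := ⟨none, some ⟨0, hq⟩, by simp⟩
  obtain ⟨v, hv⟩ := hT.2.connected.preconnected.exists_adj_of_nontrivial none
  rw [SimpleGraph.fromEdgeSet_adj] at hv
  rcases v with _ | i
  · exact absurd rfl hv.2
  · exact ⟨i, hv.1⟩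

lemma upWeight_upEdge (q : ℕ) (g : Fin q → NNReal) (i : Fin q) :
    upWeight q g (upEdge q i) = g i := rfl

lemma upWeight_downEdge (q : ℕ) (g : Fin q → NNReal) (i : Fin (q - 1)) :
    upWeight q g (downEdge q i) = 0 := rfl

lemma sum_upWeight_combEdges (q : ℕ) (g : Fin q → NNReal) (i : Fin q) :
    ∑ e ∈ combEdges q {i}, upWeight q g e = g i := by
  rw [Finset.sum_eq_single (upEdge q i)]
  · rfl
  · intro e he hne
    rcases mem_edgeSet_redGraph.1 (combEdges_subset q _ he) with ⟨k, rfl⟩ | ⟨k, rfl⟩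
    · rw [upEdge_mem_combEdges, mem_singleton] at he
      exact absurd (he ▸ rfl) hne
    · rfl
  · intro h
    exact absurd (upEdge_mem_combEdges.2 (mem_singleton_self i)) h

/-- A down-edge-plus-one-up-edge tree is minimum as soon as its up-edge has minimum weight, because
every spanning tree pays for some up-edge. -/
lemma isMST_combEdges (q : ℕ) (g : Fin q → NNReal) (i : Fin q) (hi : ∀ k, g i ≤ g k) :
    IsMST (redGraph q) (upWeight q g) (combEdges q {i}) := by
  refine ⟨isSpanningTree_combEdges q i, fun T' hT' => ?_⟩
  rw [sum_upWeight_combEdges]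
  obtain ⟨k, hk⟩ := exists_upEdge_mem i.pos hT'
  exact (hi k).trans (Finset.single_le_sum (f := upWeight q g) (fun _ _ => zero_le) hk)

lemma agentWeight_castSucc {p q : ℕ} (Sset : Fin q → Finset (Fin p)) (j : Fin p) :
    agentWeight p q Sset j.castSucc = upWeight q (fun i => if j ∈ Sset i then 0 else 1) := by
  simp [agentWeight]

lemma agentWeight_last {p q : ℕ} (Sset : Fin q → Finset (Fin p)) :
    agentWeight p q Sset (Fin.last p) = upWeight q (fun _ => 1) := by
  simp [agentWeight]

/-- When all up-edges have weight `1`, a minimum spanning tree has at most one up-edge, so that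
its `q` edges include all `q - 1` down-edges. -/
lemma downEdge_mem_of_isMST {q : ℕ} (hq : 0 < q) {T : Finset (Sym2 (Option (Fin q)))}
    (hT : IsMST (redGraph q) (upWeight q fun _ => 1) T) (i : Fin (q - 1)) :
    downEdge q i ∈ T := by
  have hw := hT.2 _ (isSpanningTree_combEdges q ⟨0, hq⟩)
  rw [sum_upWeight_combEdges] at hw
  set A := T.filter (fun e => ∃ k, upEdge q k = e) with hA
  have hcardA : A.card ≤ 1 := by
    have h1 : (A.card : NNReal) ≤ ∑ e ∈ T, upWeight q (fun _ => 1) e := by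
      calc (A.card : NNReal) = ∑ e ∈ A, upWeight q (fun _ => 1) e := by
            rw [Finset.sum_congr rfl (g := fun _ => (1 : NNReal))]
            · simp
            · intro e he
              obtain ⟨k, rfl⟩ := (mem_filter.1 he).2
              rfl
        _ ≤ _ := Finset.sum_le_sum_of_subset (filter_subset _ _)
    exact_mod_cast h1.trans hw
  by_contra hi
  have hsub : T ⊆ A ∪ (downEdges q).erase (downEdge q i) := by
    intro e he
    rcases mem_edgeSet_redGraph.1 (hT.1.1 he) with h | ⟨k, rfl⟩
    · exact mem_union_left _ (mem_filter.2 ⟨he, h⟩)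
    · refine mem_union_right _ (mem_erase.2 ⟨fun h => hi (h ▸ he), ?_⟩)
      simp [downEdges]
  have hc := (card_le_card hsub).trans (card_union_le _ _)
  rw [card_of_isSpanningTree hT.1, card_erase_of_mem (by simp [downEdges]), card_downEdges] at hc
  have := i.isLt
  omega

/-- If some up-edge has weight `0`, every minimum spanning tree contains one of weight `0`. -/
lemma exists_zero_upEdge_of_isMST {q : ℕ} {g : Fin q → NNReal} {i : Fin q} (hi : g i = 0)
    {T : Finset (Sym2 (Option (Fin q)))} (hT : IsMST (redGraph q) (upWeight q g) T) :
    ∃ k, upEdge q k ∈ T ∧ g k = 0 := by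
  have hw := hT.2 _ (isSpanningTree_combEdges q i)
  rw [sum_upWeight_combEdges, hi] at hw
  obtain ⟨k, hk⟩ := exists_upEdge_mem i.pos hT.1
  refine ⟨k, hk, le_antisymm ?_ (zero_le)⟩
  exact (Finset.single_le_sum (f := upWeight q g) (fun _ _ => zero_le) hk).trans hw

lemma mstCover_iff {p q : ℕ} (hp : 1 ≤ p) (hq : 2 ≤ q)
    (Sset : Fin q → Finset (Fin p)) (hUnion : ∀ e : Fin p, ∃ i : Fin q, e ∈ Sset i)
    (H : Finset (Sym2 (Option (Fin q)))) :
    (∀ j : Fin (p + 1), ∃ T : Finset (Sym2 (Option (Fin q))),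
        IsMST (redGraph q) (agentWeight p q Sset j) T ∧ T ⊆ H) ↔
      ((∀ i : Fin (q - 1), downEdge q i ∈ H) ∧
        ∀ j : Fin p, ∃ i : Fin q, upEdge q i ∈ H ∧ j ∈ Sset i) := by
  constructor
  · intro h
    refine ⟨fun i => ?_, fun j => ?_⟩
    · obtain ⟨T, hT, hTH⟩ := h (Fin.last p)
      rw [agentWeight_last] at hT
      exact hTH (downEdge_mem_of_isMST (by omega) hT i)
    · obtain ⟨T, hT, hTH⟩ := h j.castSucc
      rw [agentWeight_castSucc] at hT
      obtain ⟨i, hi⟩ := hUnion j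
      obtain ⟨k, hk, hk0⟩ := exists_zero_upEdge_of_isMST (i := i) (by simp [hi]) hT
      exact ⟨k, hTH hk, by simpa using hk0⟩
  · rintro ⟨hd, hu⟩ j
    have hsub : ∀ i, upEdge q i ∈ H → combEdges q {i} ⊆ H := by
      intro i hi e he
      rcases mem_edgeSet_redGraph.1 (combEdges_subset q _ he) with ⟨k, rfl⟩ | ⟨k, rfl⟩
      · rw [upEdge_mem_combEdges, mem_singleton] at he
        exact he ▸ hi
      · exact hd k
    induction j using Fin.lastCases with
    | last =>
      -- The last agent accepts any up-edge; one lies in `H` because the ground set is nonempty.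
      obtain ⟨i, hi, -⟩ := hu ⟨0, hp⟩
      refine ⟨combEdges q {i}, ?_, hsub i hi⟩
      rw [agentWeight_last]
      exact isMST_combEdges q _ i (fun _ => le_rfl)
    | cast j =>
      obtain ⟨i, hi, hij⟩ := hu j
      refine ⟨combEdges q {i}, ?_, hsub i hi⟩
      rw [agentWeight_castSucc]
      exact isMST_combEdges q _ i (fun k => by simp [hij])

/-- In the reduction from set cover, a subset `H` of the edges of the
reduction graph is an MST cover of all `p + 1` agents if and only if `H` contains all
`q − 1` down-edges and, for every element `e_j` of the set-cover ground set, some up-edge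
`(a, bᵢ)` with `e_j ∈ sᵢ`. Consequently, the minimum cardinality of an MST cover equals
`(q − 1)` plus the set cover optimum. -/
theorem set_cover_reduction (p q : ℕ) (hp : 1 ≤ p) (hq : 2 ≤ q)
    (Sset : Fin q → Finset (Fin p)) (hUnion : ∀ e : Fin p, ∃ i : Fin q, e ∈ Sset i) :
    (∀ H : Finset (Sym2 (Option (Fin q))), (H : Set (Sym2 (Option (Fin q)))) ⊆ (redGraph q).edgeSet →
      ((∀ j : Fin (p + 1), ∃ T : Finset (Sym2 (Option (Fin q))),
          IsMST (redGraph q) (agentWeight p q Sset j) T ∧ T ⊆ H) ↔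
        ((∀ i : Fin (q - 1), downEdge q i ∈ H) ∧
          ∀ j : Fin p, ∃ i : Fin q, upEdge q i ∈ H ∧ j ∈ Sset i))) ∧
    sInf {n : ℕ | ∃ H : Finset (Sym2 (Option (Fin q))),
        (H : Set (Sym2 (Option (Fin q)))) ⊆ (redGraph q).edgeSet ∧
        (∀ j : Fin (p + 1), ∃ T : Finset (Sym2 (Option (Fin q))),
          IsMST (redGraph q) (agentWeight p q Sset j) T ∧ T ⊆ H) ∧
        H.card = n} =
      (q - 1) + sInf {m : ℕ | ∃ C : Finset (Fin q),
        (∀ e : Fin p, ∃ i ∈ C, e ∈ Sset i) ∧ C.card = m} := by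
  have hiff := mstCover_iff hp hq Sset hUnion
  refine ⟨fun H _ => hiff H, le_antisymm ?_ ?_⟩
  · have hne : {m : ℕ | ∃ C : Finset (Fin q),
        (∀ e : Fin p, ∃ i ∈ C, e ∈ Sset i) ∧ C.card = m}.Nonempty :=
      ⟨_, univ, fun e => by simpa using hUnion e, rfl⟩
    obtain ⟨C, hC, hcard⟩ := Nat.sInf_mem hne
    rw [← hcard]
    refine Nat.sInf_le ⟨combEdges q C, combEdges_subset q C, ?_, card_combEdges q C⟩
    rw [hiff]
    refine ⟨downEdge_mem_combEdges C, fun j => ?_⟩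
    obtain ⟨i, hi, hij⟩ := hC j
    exact ⟨i, upEdge_mem_combEdges.2 hi, hij⟩
  · refine le_csInf ?_ ?_
    · refine ⟨_, combEdges q univ, combEdges_subset q _, ?_, rfl⟩
      rw [hiff]
      refine ⟨downEdge_mem_combEdges _, fun j => ?_⟩
      obtain ⟨i, hij⟩ := hUnion j
      exact ⟨i, upEdge_mem_combEdges.2 (mem_univ i), hij⟩
    · rintro n ⟨H, hH, hcov, rfl⟩
      obtain ⟨hd, hu⟩ := (hiff H).1 hcov
      rw [eq_combEdges hH hd, card_combEdges]
      refine Nat.add_le_add_left (Nat.sInf_le ?_) _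
      refine ⟨_, fun e => ?_, rfl⟩
      obtain ⟨i, hi, hie⟩ := hu e
      exact ⟨i, by simpa using hi, hie⟩
end
end
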